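/- arXiv:1010.5144 — 3 statements merged into one kernel-verified Lean document; each statement's English description precedes it below -/
import Mathlib

section
/- Let G be a connected graph of order n₁ and let n₂ ≥ 2 be an integer. If n₁ > 2n₂ + 1, then pd(G⊙K_{n₂}) ≥ n₂ + 2. -/
open SimpleGraph

/-- The corona product `G ⊙ H`: one copy of `G`, one copy of `H` for each vertex of `G`,
with the `i`-th vertex of `G` joined to every vertex of the `i`-th copy of `H`. -/
def corona {α β : Type*} (G : SimpleGraph α) (H : SimpleGraph β) :
    SimpleGraph (α ⊕ α × β) :=
  SimpleGraph.fromRel (fun x y =>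
    match x, y with
    | Sum.inl a, Sum.inl b => G.Adj a b
    | Sum.inl a, Sum.inr iu => a = iu.1
    | Sum.inr iu, Sum.inr jw => iu.1 = jw.1 ∧ H.Adj iu.2 jw.2
    | _, _ => False)

/-- The distance from a vertex to a set of vertices: `d(v,A) = min_{u ∈ A} d(v,u)`. -/
noncomputable def setDist {α : Type*} (G : SimpleGraph α) (v : α) (A : Set α) : ℕ :=
  sInf (G.dist v '' A)

/-- `S` is a resolving set for `G`: distinct vertices have distinct metric representations. -/
def IsResolvingSet {α : Type*} (G : SimpleGraph α) (S : Set α) : Prop :=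
  ∀ u v : α, (∀ w ∈ S, G.dist u w = G.dist v w) → u = v

/-- The metric dimension of `G`: minimum cardinality of a resolving set. -/
noncomputable def metricDim {α : Type*} (G : SimpleGraph α) : ℕ :=
  sInf {k | ∃ S : Set α, IsResolvingSet G S ∧ S.ncard = k}

/-- A family of sets is a resolving partition for `G` if it is a partition of the vertex set
into nonempty cells and distinct vertices have distinct partition representations. -/
def IsResolvingPartition {α : Type*} (G : SimpleGraph α) (P : Set (Set α)) : Prop :=
  (∀ A ∈ P, A.Nonempty) ∧ (∀ v : α, ∃! A : Set α, A ∈ P ∧ v ∈ A) ∧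
    ∀ u v : α, (∀ A ∈ P, setDist G u A = setDist G v A) → u = v

/-- The partition dimension of `G`: minimum number of cells in a resolving partition. -/
noncomputable def partitionDim {α : Type*} (G : SimpleGraph α) : ℕ :=
  sInf {t | ∃ P : Set (Set α), IsResolvingPartition G P ∧ P.ncard = t}

/-- `c(H)`: the maximum cardinality of a connected component of `H` which is isomorphic to a
complete graph (i.e. whose vertex set is a clique). -/
noncomputable def maxCompleteComp {β : Type*} (H : SimpleGraph β) : ℕ :=
  sSup {k | ∃ C : H.ConnectedComponent, H.IsClique C.supp ∧ C.supp.ncard = k}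

/-- `β(H)`: the number of isolated vertices of `H`. -/
noncomputable def numIsolated {β : Type*} (H : SimpleGraph β) : ℕ :=
  Set.ncard {v : β | ∀ u, ¬ H.Adj v u}

/-- `α(H)`: the number of connected components of `H` of order greater than one. -/
noncomputable def numBigComp {β : Type*} (H : SimpleGraph β) : ℕ :=
  Set.ncard {C : H.ConnectedComponent | 1 < C.supp.ncard}

/-!
Write `K` for the complete graph. The vertices of `G ⊙ K` projecting to a fixed vertex `i` of `G`
form a clique, so each of them is at distance at most one from every cell that meets this fibre; a
vertex of the copy of `K` over `i` is one step further than `i` from every other cell. Hence a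
resolving partition puts the vertices of a copy of `K` into different cells, and if it has at most
`|K| + 1` cells, then a copy whose fibre misses a cell `A` meets all the others.

Two fibres that meet every cell cannot be told apart inside a common cell, so at most one fibre
meets every cell. Among the vertices `i` of `G` whose fibre misses `A`, the vertices of the fibre
over `i` can only be distinguished by `d(i, A)`. Comparing two copies within a common cell shows
that `d(i, A)` determines `i`, and comparing `i` with a vertex of the copy over `j` shows that
`d(i, A)` and `d(j, A)` are never consecutive. If `d(i, A) ≥ 3`, then a neighbour of `i` in `G` also
misses `A`, at a distance equal or consecutive to `d(i, A)`, which is impossible. So `d(i, A)` is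
always `1` or always `2`, and at most one fibre misses `A`. Altogether `G` has at most one vertex
more than the partition has cells.
-/

section SetDist

variable {α : Type*} {G : SimpleGraph α} {v w : α} {A : Set α}

lemma setDist_le_dist (v : α) (hw : w ∈ A) : setDist G v A ≤ G.dist v w :=
  Nat.sInf_le ⟨w, hw, rfl⟩

lemma exists_dist_eq_setDist (v : α) (hA : A.Nonempty) : ∃ w ∈ A, G.dist v w = setDist G v A :=
  Nat.sInf_mem (hA.image (G.dist v))

lemma setDist_of_mem (hv : v ∈ A) : setDist G v A = 0 := by
  simpa using setDist_le_dist (G := G) v hv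

lemma setDist_pos (hG : G.Connected) (hA : A.Nonempty) (hv : v ∉ A) : 0 < setDist G v A := by
  obtain ⟨w, hw, hdist⟩ := exists_dist_eq_setDist (G := G) v hA
  exact hdist ▸ hG.pos_dist_of_ne (ne_of_mem_of_not_mem hw hv).symm

lemma setDist_le_add_one_of_adj (hG : G.Connected) (hA : A.Nonempty) (hvw : G.Adj v w) :
    setDist G v A ≤ setDist G w A + 1 := by
  obtain ⟨a, ha, hdist⟩ := exists_dist_eq_setDist (G := G) w hA
  calc
    setDist G v A ≤ G.dist v a := setDist_le_dist v ha
    _ ≤ G.dist v w + G.dist w a := hG.dist_triangle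
    _ = setDist G w A + 1 := by rw [dist_eq_one_iff_adj.2 hvw, hdist, add_comm]

end SetDist

section Partition

variable {α : Type*} {G : SimpleGraph α}

lemma IsResolvingPartition.cell_eq {P : Set (Set α)} (hP : IsResolvingPartition G P)
    {A B : Set α} (hA : A ∈ P) (hB : B ∈ P) {v : α} (hvA : v ∈ A) (hvB : v ∈ B) : A = B :=
  (hP.2.1 v).unique ⟨hA, hvA⟩ ⟨hB, hvB⟩

lemma isResolvingPartition_range_singleton (hG : G.Connected) :
    IsResolvingPartition G (Set.range ({·} : α → Set α)) := by
  refine ⟨Set.forall_mem_range.2 Set.singleton_nonempty, fun v => ?_, fun u v huv => ?_⟩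
  · refine ⟨{v}, ⟨⟨v, rfl⟩, rfl⟩, ?_⟩
    rintro _ ⟨⟨w, rfl⟩, rfl⟩
    rfl
  · by_contra hne
    refine (setDist_pos hG (Set.singleton_nonempty v) hne).ne' ?_
    rw [huv {v} ⟨v, rfl⟩, setDist_of_mem (Set.mem_singleton v)]

/-- Connectedness provides a resolving partition; without one the infimum in `partitionDim` would be
the junk value `0`. -/
lemma le_partitionDim (hG : G.Connected) {k : ℕ}
    (h : ∀ P, IsResolvingPartition G P → k ≤ P.ncard) : k ≤ partitionDim G := by
  refine le_csInf ⟨_, _, isResolvingPartition_range_singleton hG, rfl⟩ ?_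
  rintro _ ⟨P, hP, rfl⟩
  exact h P hP

end Partition

section Corona

variable {V β : Type*} {G : SimpleGraph V} {H : SimpleGraph β}

/-- The projection of the corona product onto its base graph, collapsing the `i`-th copy of the
second graph to `i`. The fibre over `i` meets a set `A` of vertices iff `i ∈ coronaBase '' A`. -/
def coronaBase : V ⊕ V × β → V :=
  Sum.elim id Prod.fst

@[simp]
lemma coronaBase_inl (i : V) : coronaBase (Sum.inl i : V ⊕ V × β) = i :=
  rfl

@[simp]
lemma coronaBase_inr (x : V × β) : coronaBase (Sum.inr x) = x.1 :=
  rfl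

@[simp]
lemma corona_adj_inl_inl {i j : V} :
    (corona G H).Adj (Sum.inl i) (Sum.inl j) ↔ G.Adj i j := by
  simpa [corona, G.adj_comm j i] using fun h : G.Adj i j => h.ne

@[simp]
lemma corona_adj_inl_inr {i : V} {x : V × β} :
    (corona G H).Adj (Sum.inl i) (Sum.inr x) ↔ i = x.1 := by
  simp [corona]

@[simp]
lemma corona_adj_inr_inr {x y : V × β} :
    (corona G H).Adj (Sum.inr x) (Sum.inr y) ↔ x.1 = y.1 ∧ H.Adj x.2 y.2 := by
  simp only [corona, fromRel_adj, ne_eq, Sum.inr.injEq, eq_comm (a := y.1), H.adj_comm y.2, or_self,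
    and_iff_right_iff_imp]
  rintro ⟨-, hadj⟩ rfl
  exact hadj.ne rfl

lemma corona_top_adj_of_base_eq {x y : V ⊕ V × β} (hne : x ≠ y)
    (hbase : coronaBase x = coronaBase y) : (corona G (⊤ : SimpleGraph β)).Adj x y := by
  rcases x with i | ⟨i, u⟩ <;> rcases y with j | ⟨j, w⟩ <;>
    simp_all [adj_comm _ (Sum.inr _) (Sum.inl _)]

lemma corona_connected (hG : G.Connected) : (corona G H).Connected := by
  obtain ⟨r⟩ := hG.nonempty
  let inlHom : G →g corona G H := ⟨Sum.inl, corona_adj_inl_inl.2⟩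
  refine connected_iff_exists_forall_reachable _ |>.2 ⟨Sum.inl r, ?_⟩
  rintro (i | ⟨i, u⟩)
  · exact (hG.preconnected r i).map inlHom
  · have hadj : (corona G H).Adj (Sum.inl i) (Sum.inr (i, u)) := corona_adj_inl_inr.2 rfl
    exact ((hG.preconnected r i).map inlHom).trans hadj.reachable

lemma corona_dist_inl_lt_length {i : V} {u : β} {x y : V ⊕ V × β} (p : (corona G H).Walk y x)
    (hy : y = Sum.inr (i, u)) (hx : coronaBase x ≠ i) :
    (corona G H).dist (Sum.inl i) x < p.length := by
  induction p generalizing u with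
  | nil => exact absurd (by rw [hy, coronaBase_inr]) hx
  | @cons _ z _ hadj p ih =>
    subst hy
    rcases z with j | ⟨j, w⟩
    · obtain rfl : j = i := corona_adj_inl_inr.1 hadj.symm
      exact Nat.lt_succ_of_le (dist_le p)
    · obtain rfl : i = j := (corona_adj_inr_inr.1 hadj).1
      exact (ih rfl hx).trans (Nat.lt_succ_self _)

lemma setDist_corona_inr (hG : G.Connected) {i : V} (u : β) {A : Set (V ⊕ V × β)}
    (hA : A.Nonempty) (hi : i ∉ coronaBase '' A) :
    setDist (corona G H) (Sum.inr (i, u)) A = setDist (corona G H) (Sum.inl i) A + 1 := by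
  have hc : (corona G H).Connected := corona_connected hG
  refine (setDist_le_add_one_of_adj hc hA (corona_adj_inl_inr.2 rfl).symm).antisymm ?_
  obtain ⟨a, ha, hdist⟩ := exists_dist_eq_setDist (G := corona G H) (Sum.inr (i, u)) hA
  obtain ⟨p, hp⟩ := hc.exists_walk_length_eq_dist (Sum.inr (i, u)) a
  calc
    setDist (corona G H) (Sum.inl i) A + 1 ≤ (corona G H).dist (Sum.inl i) a + 1 :=
      Nat.succ_le_succ (setDist_le_dist _ ha)
    _ ≤ p.length := corona_dist_inl_lt_length p rfl fun h => hi ⟨a, ha, h⟩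
    _ = setDist (corona G H) (Sum.inr (i, u)) A := hp.trans hdist

lemma setDist_corona_top_le_one {x : V ⊕ V × β} {A : Set (V ⊕ V × β)}
    (hx : coronaBase x ∈ coronaBase '' A) :
    setDist (corona G (⊤ : SimpleGraph β)) x A ≤ 1 := by
  obtain ⟨a, ha, hbase⟩ := hx
  rcases eq_or_ne x a with rfl | hne
  · simp [setDist_of_mem ha]
  · exact (setDist_le_dist x ha).trans
      (dist_eq_one_iff_adj.2 (corona_top_adj_of_base_eq hne hbase.symm)).le

end Corona

namespace IsResolvingPartition

variable {V β : Type*} {G : SimpleGraph V} {P : Set (Set (V ⊕ V × β))} {A B : Set (V ⊕ V × β)}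
  {i j : V}

lemma eq_of_mem_cell (hP : IsResolvingPartition (corona G (⊤ : SimpleGraph β)) P)
    (hG : G.Connected) {x y : V ⊕ V × β} (hB : B ∈ P) (hx : x ∈ B) (hy : y ∈ B)
    (h : ∀ C ∈ P, (coronaBase x ∈ coronaBase '' C ∧ coronaBase y ∈ coronaBase '' C) ∨
      setDist (corona G (⊤ : SimpleGraph β)) x C = setDist (corona G (⊤ : SimpleGraph β)) y C) :
    x = y := by
  refine hP.2.2 x y fun C hC => ?_
  rcases eq_or_ne C B with rfl | hCB
  · rw [setDist_of_mem hx, setDist_of_mem hy]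
  have setDist_eq_one {z} (hz : z ∈ B) (hzC : coronaBase z ∈ coronaBase '' C) :
      setDist (corona G (⊤ : SimpleGraph β)) z C = 1 :=
    (setDist_corona_top_le_one hzC).antisymm <|
      setDist_pos (corona_connected hG) (hP.1 C hC) fun hz' => hCB (hP.cell_eq hC hB hz' hz)
  rcases h C hC with ⟨hxC, hyC⟩ | heq
  · rw [setDist_eq_one hx hxC, setDist_eq_one hy hyC]
  · exact heq

lemma eq_of_inr_mem_cell (hP : IsResolvingPartition (corona G (⊤ : SimpleGraph β)) P)
    (hG : G.Connected) {u w : β} (hA : A ∈ P) (hu : Sum.inr (i, u) ∈ A)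
    (hw : Sum.inr (i, w) ∈ A) : u = w := by
  have heq : (Sum.inr (i, u) : V ⊕ V × β) = Sum.inr (i, w) := by
    refine hP.eq_of_mem_cell hG hA hu hw fun C hC => ?_
    by_cases hi : i ∈ coronaBase '' C
    · exact .inl ⟨hi, hi⟩
    · right
      rw [setDist_corona_inr hG u (hP.1 C hC) hi, setDist_corona_inr hG w (hP.1 C hC) hi]
  exact (Prod.ext_iff.1 (Sum.inr_injective heq)).2

lemma card_le_ncard_of_forall_inr_mem (hP : IsResolvingPartition (corona G (⊤ : SimpleGraph β)) P)
    (hG : G.Connected) {Q : Set (Set (V ⊕ V × β))} (hQ : Q.Finite)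
    (h : ∀ A ∈ P, ∀ u, Sum.inr (i, u) ∈ A → A ∈ Q) : Nat.card β ≤ Q.ncard := by
  choose cell hcell _ using fun u : β => hP.2.1 (Sum.inr (i, u))
  have : Finite Q := hQ
  refine Nat.card_le_card_of_injective (β := Q)
    (fun u => ⟨cell u, h (cell u) (hcell u).1 u (hcell u).2⟩) fun u w huw => ?_
  have huw' : cell u = cell w := congrArg Subtype.val huw
  exact hP.eq_of_inr_mem_cell hG (hcell u).1 (hcell u).2 (huw' ▸ (hcell w).2)

lemma exists_inr_mem_of_notMem_image (hP : IsResolvingPartition (corona G (⊤ : SimpleGraph β)) P)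
    (hG : G.Connected) (hfin : P.Finite) (hcard : P.ncard ≤ Nat.card β + 1) (hA : A ∈ P)
    (hi : i ∉ coronaBase '' A) (hB : B ∈ P) (hBA : B ≠ A) : ∃ u, Sum.inr (i, u) ∈ B := by
  by_contra! hiB
  have hcopy : Nat.card β ≤ (P \ {A, B}).ncard := by
    refine hP.card_le_ncard_of_forall_inr_mem (i := i) hG hfin.sdiff fun C hC u hu => ⟨hC, ?_⟩
    rintro (rfl | rfl)
    · exact hi ⟨_, hu, rfl⟩
    · exact hiB u hu
  have hsub : {A, B} ⊆ P := Set.pair_subset hA hB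
  have hsplit := Set.ncard_sdiff_add_ncard_of_subset hsub hfin
  rw [Set.ncard_pair hBA.symm] at hsplit
  omega

lemma eq_of_forall_mem_image (hP : IsResolvingPartition (corona G (⊤ : SimpleGraph β)) P)
    (hG : G.Connected) (hi : ∀ A ∈ P, i ∈ coronaBase '' A)
    (hj : ∀ A ∈ P, j ∈ coronaBase '' A) : i = j := by
  obtain ⟨B, ⟨hB, -⟩, -⟩ := hP.2.1 (Sum.inl i)
  obtain ⟨x, hx, rfl⟩ := hi B hB
  obtain ⟨y, hy, rfl⟩ := hj B hB
  exact congrArg coronaBase <| hP.eq_of_mem_cell hG hB hx hy fun C hC => .inl ⟨hi C hC, hj C hC⟩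

lemma eq_of_notMem_image_of_setDist_eq
    (hP : IsResolvingPartition (corona G (⊤ : SimpleGraph β)) P) (hG : G.Connected)
    (hfin : P.Finite) (hcard : P.ncard ≤ Nat.card β + 1) {x y : V ⊕ V × β} (hA : A ∈ P)
    (hB : B ∈ P) (hx : x ∈ B) (hy : y ∈ B)
    (hxA : coronaBase x ∉ coronaBase '' A) (hyA : coronaBase y ∉ coronaBase '' A)
    (hdist : setDist (corona G (⊤ : SimpleGraph β)) x A =
      setDist (corona G (⊤ : SimpleGraph β)) y A) : x = y := by
  refine hP.eq_of_mem_cell hG hB hx hy fun C hC => ?_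
  rcases eq_or_ne C A with rfl | hCA
  · exact .inr hdist
  · obtain ⟨u, hu⟩ := hP.exists_inr_mem_of_notMem_image hG hfin hcard hA hxA hC hCA
    obtain ⟨w, hw⟩ := hP.exists_inr_mem_of_notMem_image hG hfin hcard hA hyA hC hCA
    exact .inl ⟨⟨_, hu, rfl⟩, ⟨_, hw, rfl⟩⟩

lemma eq_of_setDist_inl_eq (hP : IsResolvingPartition (corona G (⊤ : SimpleGraph β)) P)
    (hG : G.Connected) (hfin : P.Finite) (hcard : P.ncard ≤ Nat.card β + 1) (hA : A ∈ P)
    (hi : i ∉ coronaBase '' A) (hj : j ∉ coronaBase '' A)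
    (hdist : setDist (corona G (⊤ : SimpleGraph β)) (Sum.inl i) A =
      setDist (corona G (⊤ : SimpleGraph β)) (Sum.inl j) A) : i = j := by
  obtain ⟨B, ⟨hB, hiB⟩, -⟩ := hP.2.1 (Sum.inl i)
  have hBA : B ≠ A := by
    rintro rfl
    exact hi ⟨_, hiB, rfl⟩
  obtain ⟨u, hu⟩ := hP.exists_inr_mem_of_notMem_image hG hfin hcard hA hi hB hBA
  obtain ⟨w, hw⟩ := hP.exists_inr_mem_of_notMem_image hG hfin hcard hA hj hB hBA
  refine congrArg coronaBase <|
    hP.eq_of_notMem_image_of_setDist_eq hG hfin hcard hA hB hu hw hi hj ?_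
  rw [setDist_corona_inr hG u (hP.1 A hA) hi, setDist_corona_inr hG w (hP.1 A hA) hj, hdist]

lemma setDist_inl_ne_add_one (hP : IsResolvingPartition (corona G (⊤ : SimpleGraph β)) P)
    (hG : G.Connected) (hfin : P.Finite) (hcard : P.ncard ≤ Nat.card β + 1) (hA : A ∈ P)
    (hi : i ∉ coronaBase '' A) (hj : j ∉ coronaBase '' A) :
    setDist (corona G (⊤ : SimpleGraph β)) (Sum.inl i) A ≠
      setDist (corona G (⊤ : SimpleGraph β)) (Sum.inl j) A + 1 := by
  intro hdist
  obtain ⟨B, ⟨hB, hiB⟩, -⟩ := hP.2.1 (Sum.inl i)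
  have hBA : B ≠ A := by
    rintro rfl
    exact hi ⟨_, hiB, rfl⟩
  obtain ⟨w, hw⟩ := hP.exists_inr_mem_of_notMem_image hG hfin hcard hA hj hB hBA
  refine Sum.inl_ne_inr <|
    hP.eq_of_notMem_image_of_setDist_eq hG hfin hcard hA hB hiB hw hi hj ?_
  rw [setDist_corona_inr hG w (hP.1 A hA) hj, hdist]

lemma setDist_inl_le_two [Nontrivial V]
    (hP : IsResolvingPartition (corona G (⊤ : SimpleGraph β)) P) (hG : G.Connected)
    (hfin : P.Finite) (hcard : P.ncard ≤ Nat.card β + 1) (hA : A ∈ P)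
    (hi : i ∉ coronaBase '' A) :
    setDist (corona G (⊤ : SimpleGraph β)) (Sum.inl i) A ≤ 2 := by
  by_contra! hfar
  have hc : (corona G (⊤ : SimpleGraph β)).Connected := corona_connected hG
  obtain ⟨k, hik⟩ := hG.preconnected.exists_adj_of_nontrivial i
  have hle := setDist_le_add_one_of_adj hc (hP.1 A hA) (corona_adj_inl_inl.2 hik)
  have hge := setDist_le_add_one_of_adj hc (hP.1 A hA) (corona_adj_inl_inl.2 hik.symm)
  have hk : k ∉ coronaBase '' A := fun hk => by
    have := setDist_corona_top_le_one (G := G) (x := Sum.inl k) hk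
    omega
  have hne := hP.setDist_inl_ne_add_one hG hfin hcard hA hi hk
  have hne' := hP.setDist_inl_ne_add_one hG hfin hcard hA hk hi
  exact hik.ne (hP.eq_of_setDist_inl_eq hG hfin hcard hA hi hk (by omega))

lemma eq_of_notMem_image (hP : IsResolvingPartition (corona G (⊤ : SimpleGraph β)) P)
    (hG : G.Connected) (hfin : P.Finite) (hcard : P.ncard ≤ Nat.card β + 1) (hA : A ∈ P)
    (hi : i ∉ coronaBase '' A) (hj : j ∉ coronaBase '' A) : i = j := by
  by_contra hij
  have : Nontrivial V := nontrivial_of_ne i j hij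
  have hpos {k} (hk : k ∉ coronaBase '' A) :
      0 < setDist (corona G (⊤ : SimpleGraph β)) (Sum.inl k) A :=
    setDist_pos (corona_connected hG) (hP.1 A hA) fun hkA => hk ⟨_, hkA, rfl⟩
  have hi_pos := hpos hi
  have hj_pos := hpos hj
  have hi_le := hP.setDist_inl_le_two hG hfin hcard hA hi
  have hj_le := hP.setDist_inl_le_two hG hfin hcard hA hj
  have hne := hP.setDist_inl_ne_add_one hG hfin hcard hA hi hj
  have hne' := hP.setDist_inl_ne_add_one hG hfin hcard hA hj hi
  exact hij (hP.eq_of_setDist_inl_eq hG hfin hcard hA hi hj (by omega))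

lemma enatCard_le_encard_add_one (hP : IsResolvingPartition (corona G (⊤ : SimpleGraph β)) P)
    (hG : G.Connected) (hfin : P.Finite) (hcard : P.ncard ≤ Nat.card β + 1) :
    ENat.card V ≤ P.encard + 1 := by
  let S : Set V := {i | ∃ A ∈ P, i ∉ coronaBase '' A}
  have hS : S.encard ≤ P.encard := by
    choose! missed hmem hmissed using fun (i : V) (hi : i ∈ S) => hi
    refine Set.encard_le_encard_of_injOn (f := missed) hmem fun i hi j hj hij => ?_
    exact hP.eq_of_notMem_image hG hfin hcard (hmem i hi) (hmissed i hi) (hij ▸ hmissed j hj)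
  have hSc : Sᶜ.encard ≤ 1 := by
    refine Set.encard_le_one_iff.2 fun i j hi hj => ?_
    simp only [S, Set.mem_compl_iff, Set.mem_ofPred_eq, not_exists, not_and, not_not] at hi hj
    exact hP.eq_of_forall_mem_image hG hi hj
  calc
    ENat.card V = S.encard + Sᶜ.encard := by
      rw [Set.encard_add_encard_compl, Set.encard_univ]
    _ ≤ P.encard + 1 := add_le_add hS hSc

end IsResolvingPartition

theorem stmt10_general {V β : Type*} [Finite β] {G : SimpleGraph V} (hG : G.Connected)
    (hcard : Nat.card β + 2 < Nat.card V) :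
    Nat.card β + 2 ≤ partitionDim (corona G (⊤ : SimpleGraph β)) := by
  have : Finite V := Nat.finite_of_card_ne_zero (by omega)
  refine le_partitionDim (corona_connected hG) fun P hP => ?_
  by_contra! hlt
  have hfin : P.Finite := P.toFinite
  have hle : ENat.card V ≤ P.encard + 1 := hP.enatCard_le_encard_add_one hG hfin (by omega)
  rw [← hfin.cast_ncard_eq, ENat.card_eq_coe_natCard] at hle
  have hle' : Nat.card V ≤ P.ncard + 1 := mod_cast hle
  omega

/-- Let `G` be a connected graph of order `n₁` and `n₂ ≥ 2` an integer. If
`n₁ > 2n₂ + 1`, then `pd(G⊙K_{n₂}) ≥ n₂ + 2`. -/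
theorem stmt10 {V : Type*} [Fintype V] (G : SimpleGraph V) (hG : G.Connected)
    (n₁ n₂ : ℕ) (hn₁ : Fintype.card V = n₁) (h₂ : 2 ≤ n₂) (h : n₁ > 2 * n₂ + 1) :
    partitionDim (corona G (⊤ : SimpleGraph (Fin n₂))) ≥ n₂ + 2 := by
  simpa only [Nat.card_fin] using
    stmt10_general (β := Fin n₂) hG (by rw [Nat.card_fin, Nat.card_eq_fintype_card]; omega)
end

section
/- Let G=(V,E) be a connected graph of order n ≥ 2 and let H be a graph of order at least two, and let H_i=(V_i,E_i) be the subgraph of G⊙H corresponding to the i-th copy of H. If S is a resolving set for G⊙H, then V_i ∩ S ≠ ∅ for every i ∈ {1,...,n}. -/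
/-!
Call a set `A` of vertices a *module* if no vertex outside `A` distinguishes two members of `A` by
adjacency. A walk from `A` to a vertex outside `A` can then be started at any other member of `A`
without becoming longer: its first step out of `A` is available from everywhere in `A`. So all
members of `A` have the same distance to each outside vertex, and a resolving set must meet every
module with at least two elements. Each copy of `H` in `G ⊙ H` is a module, since the only outside
neighbour of its vertices is the vertex of `G` it is attached to.
-/

open SimpleGraph

/-- A module (or homogeneous set) of a graph: a set of vertices all of which have the same
neighbours outside the set. It abstracts the position of a copy of `H` inside `G ⊙ H`. As `u` and
`v` are interchangeable, an implication between the adjacencies suffices. -/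
def IsGraphModule {α : Type*} (G : SimpleGraph α) (A : Set α) : Prop :=
  ∀ ⦃u⦄, u ∈ A → ∀ ⦃v⦄, v ∈ A → ∀ ⦃y⦄, y ∉ A → G.Adj u y → G.Adj v y

namespace IsGraphModule

variable {α : Type*} {G : SimpleGraph α} {A : Set α} {u v x : α}

lemma edist_le_walk_length (hA : IsGraphModule G A) (hv : v ∈ A) (p : G.Walk u x) (hu : u ∈ A)
    (hx : x ∉ A) : G.edist v x ≤ p.length := by
  induction p with
  | nil => exact absurd hu hx
  | @cons u y x huy p ih =>
    by_cases hy : y ∈ A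
    · calc
        G.edist v x ≤ p.length := ih hy hx
        _ ≤ (Walk.cons huy p).length := by simp
    · have hvy : G.Adj v y := hA hu hv hy huy
      exact Walk.edist_le (Walk.cons hvy p)

lemma edist_eq (hA : IsGraphModule G A) (hu : u ∈ A) (hv : v ∈ A) (hx : x ∉ A) :
    G.edist u x = G.edist v x :=
  le_antisymm (le_iInf fun p => hA.edist_le_walk_length hu p hv hx)
    (le_iInf fun p => hA.edist_le_walk_length hv p hu hx)

lemma dist_eq (hA : IsGraphModule G A) (hu : u ∈ A) (hv : v ∈ A) (hx : x ∉ A) :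
    G.dist u x = G.dist v x :=
  congrArg ENat.toNat (hA.edist_eq hu hv hx)

end IsGraphModule

lemma IsResolvingSet.inter_nonempty_of_isGraphModule {α : Type*} {G : SimpleGraph α} {S A : Set α}
    (hS : IsResolvingSet G S) (hA : IsGraphModule G A) (hA₂ : A.Nontrivial) :
    (A ∩ S).Nonempty := by
  obtain ⟨u, hu, v, hv, huv⟩ := hA₂
  by_contra hAS
  exact huv (hS u v fun x hxS => hA.dist_eq hu hv fun hxA => hAS ⟨x, hxA, hxS⟩)

section Corona

variable {V W : Type*} {G : SimpleGraph V} {H : SimpleGraph W}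

lemma corona_adj_inr_inl {i j : V} {u : W} :
    (corona G H).Adj (Sum.inr (i, u)) (Sum.inl j) ↔ j = i := by
  simp [corona]

lemma corona_adj_inr_inr_s16 {i j : V} {u w : W} :
    (corona G H).Adj (Sum.inr (i, u)) (Sum.inr (j, w)) ↔ i = j ∧ H.Adj u w := by
  simp only [corona, fromRel_adj]
  grind [H.adj_comm u w, H.ne_of_adj]

lemma isGraphModule_corona_copy (G : SimpleGraph V) (H : SimpleGraph W) (i : V) :
    IsGraphModule (corona G H) (Set.range fun w : W => (Sum.inr (i, w) : V ⊕ V × W)) := by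
  rintro _ ⟨u, rfl⟩ _ ⟨v, rfl⟩ (j | ⟨j, w⟩) hy huy
  · rw [corona_adj_inr_inl] at huy ⊢
    exact huy
  · obtain ⟨rfl, -⟩ := corona_adj_inr_inr_s16.mp huy
    exact absurd ⟨w, rfl⟩ hy

lemma nontrivial_range_inr_mk [Nontrivial W] (i : V) :
    (Set.range fun w : W => (Sum.inr (i, w) : V ⊕ V × W)).Nontrivial :=
  Set.image_univ ▸
    Set.nontrivial_univ.image (Sum.inr_injective.comp (Prod.mk_right_injective i))

end Corona

theorem stmt16_general {V W : Type*} [Nontrivial W] (G : SimpleGraph V) (H : SimpleGraph W)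
    (S : Set (V ⊕ V × W)) (hS : IsResolvingSet (corona G H) S) (i : V) :
    (Set.range (fun w : W => (Sum.inr (i, w) : V ⊕ V × W)) ∩ S).Nonempty :=
  hS.inter_nonempty_of_isGraphModule (isGraphModule_corona_copy G H i) (nontrivial_range_inr_mk i)

/-- Let `G` be a connected graph of order `n ≥ 2` and `H` a graph of order at
least two. If `S` is a resolving set for `G⊙H`, then `V_i ∩ S ≠ ∅` for every `i`, where `V_i`
is the vertex set of the `i`-th copy of `H`. -/
theorem stmt16 {V W : Type*} [Fintype V] [Fintype W] (G : SimpleGraph V) (H : SimpleGraph W)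
    (hG : G.Connected) (h₁ : 2 ≤ Fintype.card V) (h₂ : 2 ≤ Fintype.card W)
    (S : Set (V ⊕ V × W)) (hS : IsResolvingSet (corona G H) S) :
    ∀ i : V, (Set.range (fun w : W => (Sum.inr (i, w) : V ⊕ V × W)) ∩ S).Nonempty := by
  have : Nontrivial W := Fintype.one_lt_card_iff_nontrivial.mp h₂
  exact stmt16_general G H S hS
end

section
/- Let G=(V,E) be a connected graph of order n ≥ 2 and let H be a graph of order at least two. If S is a resolving set for G⊙H of minimum cardinality, then V ∩ S = ∅, where V is the vertex set of the copy of G in G⊙H. -/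
open SimpleGraph

/-!
A walk leaves the `a`-th copy of `H` only through the vertex `a` of `G`, so the distance from a
vertex of that copy to any vertex `y` outside it is `d(a, y) + 1`. In particular the vertices of a
copy can be told apart only from within; as `|H| ≥ 2`, a resolving set `S` meets every copy.

Let `T = S \ V`. A vertex `t ∈ T` of the `a`-th copy satisfies `d(u, t) = d(u, a) + 1` for all `u`
outside that copy, so it does the work of `a` there; within the copy, `a` distinguishes nothing.
Moreover `T` tells a vertex `u` of the copy from any `v` outside it: if `v` lies in another copy, by
an element of the `a`-th copy; if `v = b ∈ V`, by an element of the `b`-th copy when `b ≠ a`, and of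
any other copy when `b = a`. So `T` is again resolving.
-/

namespace IsResolvingSet

lemma minimal_of_ncard_eq_metricDim {α : Type*} {G : SimpleGraph α} {S : Set α}
    (hS : IsResolvingSet G S) (hfin : S.Finite) (hcard : S.ncard = metricDim G) :
    Minimal (IsResolvingSet G) S := by
  refine ⟨hS, fun T hT hTS => ?_⟩
  have hle : S.ncard ≤ T.ncard := hcard.trans_le (Nat.sInf_le ⟨T, hT, rfl⟩)
  exact (Set.eq_of_subset_of_ncard_le hTS hle hfin).ge

end IsResolvingSet

namespace corona

variable {V W : Type*} {G : SimpleGraph V} {H : SimpleGraph W}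

lemma adj_inl_inl {a b : V} : (corona G H).Adj (Sum.inl a) (Sum.inl b) ↔ G.Adj a b := by
  simp only [corona, fromRel_adj, G.adj_comm b a, or_self, ne_eq, Sum.inl.injEq]
  exact and_iff_right_of_imp Adj.ne

lemma adj_inl_inr {a b : V} {w : W} :
    (corona G H).Adj (Sum.inl a) (Sum.inr (b, w)) ↔ a = b := by
  simp [corona]

lemma adj_inr_inr {a b : V} {w x : W} :
    (corona G H).Adj (Sum.inr (a, w)) (Sum.inr (b, x)) ↔ a = b ∧ H.Adj w x := by
  simp only [corona, fromRel_adj, H.adj_comm x w, eq_comm (a := b), or_self, ne_eq,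
    Sum.inr.injEq, Prod.mk.injEq]
  exact and_iff_right_of_imp fun h heq => h.2.ne heq.2

/-- The copy of `G` in `G ⊙ H`, as an embedding of graphs. -/
def inlEmbedding (G : SimpleGraph V) (H : SimpleGraph W) : G ↪g corona G H where
  toEmbedding := Function.Embedding.inl
  map_rel_iff' := adj_inl_inl

variable (W) in
/-- The vertex set of the `a`-th copy of `H` in `G ⊙ H`, without the vertex `a` of `G`. -/
def copy (a : V) : Set (V ⊕ V × W) :=
  Set.range fun w => Sum.inr (a, w)

lemma inl_notMem_copy {a b : V} : Sum.inl b ∉ copy W a := by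
  simp [copy]

lemma inr_mem_copy {a b : V} {w : W} : Sum.inr (b, w) ∈ copy W a ↔ a = b := by
  simp [copy]

section Adj

variable {a : V} {x y : V ⊕ V × W}

lemma adj_inl_of_mem_copy (hx : x ∈ copy W a) : (corona G H).Adj x (Sum.inl a) := by
  obtain ⟨w, rfl⟩ := hx
  exact (adj_inl_inr.2 rfl).symm

lemma eq_inl_or_mem_copy_of_adj (hx : x ∈ copy W a) (h : (corona G H).Adj x y) :
    y = Sum.inl a ∨ y ∈ copy W a := by
  obtain ⟨w, rfl⟩ := hx
  rcases y with b | ⟨b, z⟩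
  · exact Or.inl (congrArg Sum.inl (adj_inl_inr.1 h.symm))
  · exact Or.inr (inr_mem_copy.2 (adj_inr_inr.1 h).1)

end Adj

protected lemma connected (hG : G.Connected) : (corona G H).Connected := by
  obtain ⟨a⟩ := hG.nonempty
  have hinl (b : V) : (corona G H).Reachable (Sum.inl a) (Sum.inl b) :=
    (hG.preconnected a b).map (inlEmbedding G H).toHom
  refine (connected_iff_exists_forall_reachable _).2 ⟨Sum.inl a, ?_⟩
  rintro (b | ⟨b, w⟩)
  · exact hinl b
  · exact (hinl b).trans (adj_inl_inr.2 rfl).reachable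

section Dist

variable {a : V} {u v t x y : V ⊕ V × W}

lemma dist_inl_lt_length (p : (corona G H).Walk x y) (hx : x ∈ copy W a) (hy : y ∉ copy W a) :
    (corona G H).dist (Sum.inl a) y < p.length := by
  induction p with
  | nil => exact absurd hx hy
  | cons h p ih =>
    rw [Walk.length_cons, Nat.lt_succ_iff]
    rcases eq_inl_or_mem_copy_of_adj hx h with rfl | hmem
    · exact dist_le p
    · exact (ih hmem hy).le

lemma dist_inl_of_mem_copy (hx : x ∈ copy W a) : (corona G H).dist x (Sum.inl a) = 1 :=
  dist_eq_one_iff_adj.2 (adj_inl_of_mem_copy hx)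

lemma dist_eq_dist_inl_add_one (hG : G.Connected) (hx : x ∈ copy W a) (hy : y ∉ copy W a) :
    (corona G H).dist x y = (corona G H).dist (Sum.inl a) y + 1 := by
  have hconn : (corona G H).Connected := corona.connected hG
  apply le_antisymm
  · calc
      (corona G H).dist x y
          ≤ (corona G H).dist x (Sum.inl a) + (corona G H).dist (Sum.inl a) y :=
        hconn.dist_triangle
      _ = (corona G H).dist (Sum.inl a) y + 1 := by rw [dist_inl_of_mem_copy hx, add_comm]
  · obtain ⟨p, hp⟩ := hconn.exists_walk_length_eq_dist x y
    exact hp ▸ dist_inl_lt_length p hx hy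

lemma dist_le_two_of_mem_copy (hG : G.Connected) (hx : x ∈ copy W a) (hy : y ∈ copy W a) :
    (corona G H).dist x y ≤ 2 := by
  have h := (corona.connected (H := H) hG).dist_triangle (u := x) (v := Sum.inl a) (w := y)
  rwa [dist_inl_of_mem_copy hx, dist_comm (u := Sum.inl a), dist_inl_of_mem_copy hy] at h

lemma dist_inl_eq_dist_inl_of_notMem_copy (hG : G.Connected) (ht : t ∈ copy W a)
    (hu : u ∉ copy W a) (hv : v ∉ copy W a)
    (h : (corona G H).dist u t = (corona G H).dist v t) :
    (corona G H).dist u (Sum.inl a) = (corona G H).dist v (Sum.inl a) := by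
  rw [dist_comm, dist_eq_dist_inl_add_one hG ht hu, dist_comm (u := v),
    dist_eq_dist_inl_add_one hG ht hv, add_left_inj] at h
  rw [dist_comm, h, dist_comm]

end Dist

section Resolving

variable {a : V} {u v : V ⊕ V × W} {S T : Set (V ⊕ V × W)}

lemma inter_copy_nonempty_of_isResolvingSet [Nontrivial W] (hG : G.Connected)
    (hS : IsResolvingSet (corona G H) S) (a : V) : (S ∩ copy W a).Nonempty := by
  by_contra hempty
  obtain ⟨w, x, hwx⟩ := exists_pair_ne W
  refine hwx ?_
  have heq : (Sum.inr (a, w) : V ⊕ V × W) = Sum.inr (a, x) := hS _ _ fun s hs => by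
    have hsa : s ∉ copy W a := fun hsa => hempty ⟨s, hs, hsa⟩
    rw [dist_eq_dist_inl_add_one hG ⟨w, rfl⟩ hsa, dist_eq_dist_inl_add_one hG ⟨x, rfl⟩ hsa]
  exact (Prod.mk.inj (Sum.inr.inj heq)).2

lemma ne_inl_of_forall_dist_eq [Nontrivial V] (hG : G.Connected)
    (hT : ∀ c, (T ∩ copy W c).Nonempty)
    (huv : ∀ t ∈ T, (corona G H).dist u t = (corona G H).dist v t) (hu : u ∈ copy W a) (b : V) :
    v ≠ Sum.inl b := by
  rintro rfl
  have hdist (c : V) (hc : u ∉ copy W c) :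
      (corona G H).dist u (Sum.inl c) = (corona G H).dist (Sum.inl b) (Sum.inl c) := by
    obtain ⟨t, htT, htc⟩ := hT c
    exact dist_inl_eq_dist_inl_of_notMem_copy hG htc hc inl_notMem_copy (huv t htT)
  have hnotMem {c : V} (hca : c ≠ a) : u ∉ copy W c := by
    obtain ⟨w, rfl⟩ := hu
    exact mt inr_mem_copy.1 hca
  have hadd (c : V) : (corona G H).dist u (Sum.inl c)
      = (corona G H).dist (Sum.inl a) (Sum.inl c) + 1 :=
    dist_eq_dist_inl_add_one hG hu inl_notMem_copy
  rcases eq_or_ne b a with rfl | hba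
  · obtain ⟨c, hcb⟩ := exists_ne b
    exact Nat.succ_ne_self _ ((hadd c).symm.trans (hdist c (hnotMem hcb)))
  · have hzero := (hdist b (hnotMem hba)).trans dist_self
    exact Nat.succ_ne_zero _ ((hadd b).symm.trans hzero)

lemma mem_copy_of_forall_dist_eq [Nontrivial V] (hG : G.Connected)
    (hT : ∀ c, (T ∩ copy W c).Nonempty)
    (huv : ∀ t ∈ T, (corona G H).dist u t = (corona G H).dist v t) (hu : u ∈ copy W a) :
    v ∈ copy W a := by
  rcases v with b | ⟨b, w⟩
  · exact absurd rfl (ne_inl_of_forall_dist_eq hG hT huv hu b)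
  by_contra hv
  have hab : a ≠ b := mt inr_mem_copy.2 hv
  obtain ⟨t, htT, hta⟩ := hT a
  have htb : t ∉ copy W b := by
    obtain ⟨x, rfl⟩ := hta
    exact mt inr_mem_copy.1 hab.symm
  have hpos : 0 < (corona G H).dist (Sum.inl a) (Sum.inl b) :=
    (corona.connected hG).pos_dist_of_ne (Sum.inl_injective.ne hab)
  have hfar : (corona G H).dist (Sum.inr (b, w)) t
      = (corona G H).dist (Sum.inl a) (Sum.inl b) + 1 + 1 := by
    rw [dist_eq_dist_inl_add_one hG ⟨w, rfl⟩ htb, dist_comm,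
      dist_eq_dist_inl_add_one hG hta inl_notMem_copy]
  have hnear : (corona G H).dist u t ≤ 2 := dist_le_two_of_mem_copy hG hu hta
  rw [huv t htT, hfar] at hnear
  omega

lemma isResolvingSet_diff_range_inl [Nontrivial V] [Nontrivial W] (hG : G.Connected)
    (hS : IsResolvingSet (corona G H) S) :
    IsResolvingSet (corona G H) (S \ Set.range Sum.inl) := by
  have hmeet (c : V) : ((S \ Set.range Sum.inl) ∩ copy W c).Nonempty := by
    obtain ⟨_, hs, w, rfl⟩ := inter_copy_nonempty_of_isResolvingSet hG hS c
    exact ⟨_, ⟨hs, by simp⟩, w, rfl⟩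
  intro u v huv
  refine hS u v fun s hs => ?_
  rcases s with a | s
  · have hiff : u ∈ copy W a ↔ v ∈ copy W a :=
      ⟨mem_copy_of_forall_dist_eq hG hmeet huv,
        mem_copy_of_forall_dist_eq hG hmeet fun t ht => (huv t ht).symm⟩
    by_cases hu : u ∈ copy W a
    · rw [dist_inl_of_mem_copy hu, dist_inl_of_mem_copy (hiff.1 hu)]
    · obtain ⟨t, ht, hta⟩ := hmeet a
      exact dist_inl_eq_dist_inl_of_notMem_copy hG hta hu (mt hiff.2 hu) (huv t ht)
  · exact huv _ ⟨hs, by simp⟩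

end Resolving

end corona

theorem stmt17_general {V W : Type*} [Nontrivial V] [Nontrivial W] (G : SimpleGraph V)
    (H : SimpleGraph W) (hG : G.Connected) (S : Set (V ⊕ V × W))
    (hS : Minimal (IsResolvingSet (corona G H)) S) (a : V) : (Sum.inl a : V ⊕ V × W) ∉ S := by
  have hdiff := corona.isResolvingSet_diff_range_inl hG hS.prop
  exact fun ha => (hS.le_of_le hdiff Set.sdiff_subset ha).2 ⟨a, rfl⟩

/-- Let `G` be a connected graph of order `n ≥ 2` and `H` a graph of order at
least two. If `S` is a resolving set for `G⊙H` of minimum cardinality, then `S` contains no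
vertex of the copy of `G` in `G⊙H`. -/
theorem stmt17 {V W : Type*} [Fintype V] [Fintype W] (G : SimpleGraph V) (H : SimpleGraph W)
    (hG : G.Connected) (h₁ : 2 ≤ Fintype.card V) (h₂ : 2 ≤ Fintype.card W)
    (S : Set (V ⊕ V × W)) (hS : IsResolvingSet (corona G H) S)
    (hmin : S.ncard = metricDim (corona G H)) :
    ∀ a : V, (Sum.inl a : V ⊕ V × W) ∉ S := by
  have : Nontrivial V := Fintype.one_lt_card_iff_nontrivial.1 h₁
  have : Nontrivial W := Fintype.one_lt_card_iff_nontrivial.1 h₂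
  exact stmt17_general G H hG S (hS.minimal_of_ncard_eq_metricDim S.toFinite hmin)
end
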